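/- For Young diagrams Δ₁, Δ₂, Δ₃, define {Δ₁Δ₂Δ₃}_n ∈ A_n for max(|Δ₁|,|Δ₂|,|Δ₃|) ≤ n ≤ |Δ₁|+|Δ₂|+|Δ₃| by: {Δ₁Δ₂Δ₃}_n = ρ_{n−|Δ₁|}(Δ₁) ∘ ρ_{n−|Δ₂|}(Δ₂) ∘ ρ_{n−|Δ₃|}(Δ₃) for n = max(|Δ₁|,|Δ₂|,|Δ₃|), and {Δ₁Δ₂Δ₃}_n = ρ_{n−|Δ₁|}(Δ₁) ∘ ρ_{n−|Δ₂|}(Δ₂) ∘ ρ_{n−|Δ₃|}(Δ₃) − Σ_{k=max(|Δ₁|,|Δ₂|,|Δ₃|)}^{n−1} ρ_{n−k}({Δ₁Δ₂Δ₃}_k) for larger n. Then the triple product in the algebra A_∞° satisfies Δ₁·Δ₂·Δ₃ = Σ_{n=max(|Δ₁|,|Δ₂|,|Δ₃|)}^{|Δ₁|+|Δ₂|+|Δ₃|} {Δ₁Δ₂Δ₃}_n. -/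

import Mathlib

open scoped Classical

/-- The full cycle type of a permutation of `Fin n`, including fixed points
(i.e. rows of length 1). -/
noncomputable def fullCycleType {n : ℕ} (g : Equiv.Perm (Fin n)) : Multiset ℕ :=
  g.cycleType + Multiset.replicate (n - g.cycleType.sum) 1

/-- `Δ^k` : the Young diagram obtained from `Δ` by adding `k` rows of length 1,
realized as a partition of a given `m ≥ |Δ| `. -/
def padTo {n : ℕ} (Δ : n.Partition) (m : ℕ) (h : n ≤ m) : m.Partition where
  parts := Δ.parts + Multiset.replicate (m - n) 1
  parts_pos := by
    intro i hi
    rcases Multiset.mem_add.mp hi with h1 | h2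
    · exact Δ.parts_pos h1
    · simp [Multiset.eq_of_mem_replicate h2]
  parts_sum := by
    simp [Δ.parts_sum]
    omega

/-- The class sum `G_n(Δ)` : sum of all permutations of cycle type `Δ` in the group
algebra `ℚ[S_n]`. -/
noncomputable def classSum (n : ℕ) (Δ : n.Partition) :
    MonoidAlgebra ℚ (Equiv.Perm (Fin n)) :=
  ∑ g ∈ Finset.univ.filter (fun g => fullCycleType g = Δ.parts),
    MonoidAlgebra.single g (1 : ℚ)

/-- The coordinates of a central element of `ℚ[S_n]` in the basis of class sums:
the (average) coefficient on the conjugacy class of cycle type `Δ`. -/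
noncomputable def classCoeff {n : ℕ} (x : MonoidAlgebra ℚ (Equiv.Perm (Fin n)))
    (Δ : n.Partition) : ℚ :=
  (∑ g ∈ Finset.univ.filter (fun g => fullCycleType g = Δ.parts), x.coeff g) /
    ((Finset.univ.filter (fun g : Equiv.Perm (Fin n) => fullCycleType g = Δ.parts)).card : ℚ)

/-- An element of `A_n` (the centre of `ℚ[S_n]`), written in coordinates with respect to
the basis of class sums, viewed inside the group algebra. -/
noncomputable def embedCenter {n : ℕ} (x : n.Partition → ℚ) :
    MonoidAlgebra ℚ (Equiv.Perm (Fin n)) :=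
  ∑ Δ : n.Partition, x Δ • classSum n Δ

/-- The product `∘` of the algebra `A_n` in the coordinates given by class sums. -/
noncomputable def circ {n : ℕ} (x y : n.Partition → ℚ) : n.Partition → ℚ :=
  fun Δ => classCoeff (embedCenter x * embedCenter y) Δ

/-- The coordinates of a single Young diagram `Δ`, i.e. of the class sum `G_n(Δ) ∈ A_n`. -/
noncomputable def diagC {n : ℕ} (Δ : n.Partition) : n.Partition → ℚ :=
  fun Λ => if Λ = Δ then 1 else 0

/-- The padding map `ρ_{m-n} : A_n → A_m`,
`ρ_k(Δ) = ((r+k)!/(r!·k!))·Δ^k` where `r` is the number of rows of length 1 of `Δ`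
(in class-sum coordinates); it is `0` when `m < n`. -/
noncomputable def rhoTo {n : ℕ} (m : ℕ) (x : n.Partition → ℚ) : m.Partition → ℚ :=
  fun Λ =>
    if n ≤ m then
      ∑ Δ : n.Partition,
        (if Λ.parts = Δ.parts + Multiset.replicate (m - n) 1 then
          (((Δ.parts.count 1 + (m - n)).factorial : ℚ) /
            ((Δ.parts.count 1).factorial * (m - n).factorial)) * x Δ
        else 0)
    else 0

/-- The element `{Δ₁Δ₂}_n ∈ A_n`, defined by the recursion
`{Δ₁Δ₂}_n = ρ_{n−|Δ₁|}(Δ₁) ∘ ρ_{n−|Δ₂|}(Δ₂) − Σ_{k=max(|Δ₁|,|Δ₂|)}^{n−1} ρ_{n−k}({Δ₁Δ₂}_k)`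
for `max(|Δ₁|,|Δ₂|) ≤ n ≤ |Δ₁|+|Δ₂|` (and `0` outside this range). -/
noncomputable def bracket {n₁ n₂ : ℕ} (Δ₁ : n₁.Partition) (Δ₂ : n₂.Partition) :
    (n : ℕ) → n.Partition → ℚ
  | n =>
    if max n₁ n₂ ≤ n ∧ n ≤ n₁ + n₂ then
      circ (rhoTo n (diagC Δ₁)) (rhoTo n (diagC Δ₂)) -
        ∑ k ∈ (Finset.Ico (max n₁ n₂) n).attach,
          rhoTo n (bracket Δ₁ Δ₂ k.1)
    else 0
  termination_by n => n
  decreasing_by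
    have := Finset.mem_Ico.mp k.2
    omega

/-- The underlying graded vector space of the algebra `A_∞° = ⊕_n A_n`. -/
abbrev Ainf : Type := Π₀ n : ℕ, (Nat.Partition n → ℚ)

/-- A Young diagram `Δ` as an element of `A_∞°`. -/
noncomputable def ofDiag {n : ℕ} (Δ : n.Partition) : Ainf :=
  DFinsupp.single n (diagC Δ)

/-- The product of two Young diagrams in `A_∞°`:
`Δ₁·Δ₂ = Σ_{n=max(|Δ₁|,|Δ₂|)}^{|Δ₁|+|Δ₂|} {Δ₁Δ₂}_n`. -/
noncomputable def diagMul {n₁ n₂ : ℕ} (Δ₁ : n₁.Partition) (Δ₂ : n₂.Partition) : Ainf :=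
  ∑ n ∈ Finset.Icc (max n₁ n₂) (n₁ + n₂), DFinsupp.single n (bracket Δ₁ Δ₂ n)

/-- The bilinear extension of the product of Young diagrams to all of `A_∞°`. -/
noncomputable def mulAinf (x y : Ainf) : Ainf :=
  ∑ n₁ ∈ x.support, ∑ n₂ ∈ y.support,
    ∑ Δ₁ : Nat.Partition n₁, ∑ Δ₂ : Nat.Partition n₂,
      (x n₁ Δ₁ * y n₂ Δ₂) • diagMul Δ₁ Δ₂
/-- The element `{Δ₁Δ₂Δ₃}_n ∈ A_n`, defined by the recursion
`{Δ₁Δ₂Δ₃}_n = ρ_{n−|Δ₁|}(Δ₁) ∘ ρ_{n−|Δ₂|}(Δ₂) ∘ ρ_{n−|Δ₃|}(Δ₃)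
  − Σ_{k=max(|Δ₁|,|Δ₂|,|Δ₃|)}^{n−1} ρ_{n−k}({Δ₁Δ₂Δ₃}_k)`
for `max(|Δ₁|,|Δ₂|,|Δ₃|) ≤ n ≤ |Δ₁|+|Δ₂|+|Δ₃|` (and `0` outside this range). -/
noncomputable def bracket3 {n₁ n₂ n₃ : ℕ} (Δ₁ : n₁.Partition) (Δ₂ : n₂.Partition)
    (Δ₃ : n₃.Partition) : (n : ℕ) → n.Partition → ℚ
  | n =>
    if max (max n₁ n₂) n₃ ≤ n ∧ n ≤ n₁ + n₂ + n₃ then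
      circ (circ (rhoTo n (diagC Δ₁)) (rhoTo n (diagC Δ₂))) (rhoTo n (diagC Δ₃)) -
        ∑ k ∈ (Finset.Ico (max (max n₁ n₂) n₃) n).attach,
          rhoTo n (bracket3 Δ₁ Δ₂ Δ₃ k.1)
    else 0
  termination_by n => n
  decreasing_by
    have := Finset.mem_Ico.mp k.2
    omega

/-!
For each `n` let `A_∞° → A_n` be the linear map given by `ρ_{n-k}` on `A_k` for `k ≤ n` and by `0`
on `A_k` for `k > n`. These projections are jointly injective, since on `A_0 ⊕ … ⊕ A_N` they form a
unitriangular system, and the recursions for `{Δ₁Δ₂}_n` and `{Δ₁Δ₂Δ₃}_n` compute the element whose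
projections are the products `∘` of the `ρ_{n-|Δ_i|}(Δ_i)`, as long as `n` is at most the sum of the
degrees. So it is enough that the projections are multiplicative, and the only question is what
happens for `n > |Δ₁| + |Δ₂|`, where the recursion has been cut off.

Now `ρ_{n-k}(x)` is the sum over all `k`-subsets `D` of `{1, …, n}` of `x` acting on `D`. In the
product of two such sums, collect the terms with `D₁ ∪ D₂ = S`. By naturality under injections of
finite sets the result is a central element of `ℚ[Perm S]` that depends only on the size of `S`,
which is at most `|Δ₁| + |Δ₂|`. Hence the product is a sum of `ρ_{n-k}` of elements of `A_k` with
`k ≤ |Δ₁| + |Δ₂|` that do not depend on `n`.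
-/

open Equiv Finset

section ViaEmbedding

variable {α β : Type*}

theorem viaEmbeddingHom_toEmbedding (c g : Perm α) :
    Perm.viaEmbeddingHom c.toEmbedding g = c * g * c⁻¹ := by
  ext x
  obtain ⟨y, rfl⟩ := c.surjective x
  simpa [Perm.viaEmbeddingHom_apply] using Perm.viaEmbedding_apply g c.toEmbedding y

/-- The homomorphism `ℚ[Perm α] → ℚ[Perm β]` extending permutations along an embedding `α ↪ β`. -/
noncomputable def transport (e : α ↪ β) :
    MonoidAlgebra ℚ (Perm α) →ₐ[ℚ] MonoidAlgebra ℚ (Perm β) :=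
  MonoidAlgebra.mapDomainAlgHom ℚ ℚ (Perm.viaEmbeddingHom e)

theorem coeff_transport_viaEmbeddingHom (e : α ↪ β) (z : MonoidAlgebra ℚ (Perm α)) (g : Perm α) :
    (transport e z).coeff (Perm.viaEmbeddingHom e g) = z.coeff g :=
  Finsupp.mapDomain_apply (Perm.viaEmbeddingHom_injective e) _ _

variable [Fintype α] [Fintype β] [DecidableEq β]

theorem exists_viaEmbeddingHom_eq (e : α ↪ β) {g : Perm β} (hg : g.support ⊆ univ.map e) :
    ∃ h, Perm.viaEmbeddingHom e h = g := by
  obtain ⟨k, rfl⟩ := (Perm.mem_range_ofSubtype_iff (p := (· ∈ Set.range e))).mpr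
    fun x hx => by simpa using hg hx
  refine ⟨(Equiv.ofInjective e e.injective).symm.permCongr k, ?_⟩
  rw [Perm.viaEmbeddingHom_apply, Perm.viaEmbedding, Perm.ofSubtype, MonoidHom.coe_mk,
    OneHom.coe_mk, Perm.extendDomain, Perm.extendDomain]
  congr 1
  ext x
  simp

theorem support_viaEmbeddingHom [DecidableEq α] (e : α ↪ β) (g : Perm α) :
    (Perm.viaEmbeddingHom e g).support = g.support.map e := by
  rw [Perm.viaEmbeddingHom_apply, Perm.viaEmbedding]
  convert Perm.support_extend_domain (Equiv.ofInjective e.1 e.2)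
  rfl

theorem cycleType_viaEmbeddingHom [DecidableEq α] (e : α ↪ β) (g : Perm α) :
    (Perm.viaEmbeddingHom e g).cycleType = g.cycleType := by
  rw [Perm.viaEmbeddingHom_apply, Perm.viaEmbedding]
  convert Perm.cycleType_extendDomain (Equiv.ofInjective e.1 e.2)

end ViaEmbedding

section CycleTypeOn

variable {α β : Type*} [Fintype α] [DecidableEq α] [Fintype β] [DecidableEq β]

/-- The cycle type, rows of length 1 included, of a permutation `g` supported in `D`, regarded as
a permutation of `D`. The subtraction is not truncated when `g.support ⊆ D`. -/
def cycleTypeOn (D : Finset α) (g : Perm α) : Multiset ℕ :=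
  g.cycleType + Multiset.replicate (#D - g.cycleType.sum) 1

theorem sum_cycleTypeOn {D : Finset α} {g : Perm α} (hg : g.support ⊆ D) :
    (cycleTypeOn D g).sum = #D := by
  have := card_le_card hg
  rw [cycleTypeOn, Multiset.sum_add, Multiset.sum_replicate, Perm.sum_cycleType, smul_eq_mul]
  lia

theorem cycleTypeOn_eq_add_replicate {D E : Finset α} {g : Perm α} (hg : g.support ⊆ D)
    (hDE : #D ≤ #E) :
    cycleTypeOn E g = cycleTypeOn D g + Multiset.replicate (#E - #D) 1 := by
  have := card_le_card hg
  rw [cycleTypeOn, cycleTypeOn, add_assoc, ← Multiset.replicate_add, Perm.sum_cycleType]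
  congr 2
  lia

theorem count_one_cycleTypeOn (D : Finset α) (g : Perm α) :
    (cycleTypeOn D g).count 1 = #D - #g.support := by
  have not_mem : 1 ∉ g.cycleType := fun h => absurd (Perm.two_le_of_mem_cycleType h) (by decide)
  rw [cycleTypeOn, Multiset.count_add, Multiset.count_eq_zero_of_notMem not_mem,
    Multiset.count_replicate_self, Perm.sum_cycleType, zero_add]

theorem fullCycleType_eq_cycleTypeOn_univ {n : ℕ} (g : Perm (Fin n)) :
    fullCycleType g = cycleTypeOn univ g := by
  rw [fullCycleType, cycleTypeOn, card_fin]

theorem cycleTypeOn_map_viaEmbeddingHom (e : α ↪ β) (D : Finset α) (g : Perm α) :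
    cycleTypeOn (D.map e) (Perm.viaEmbeddingHom e g) = cycleTypeOn D g := by
  rw [cycleTypeOn, cycleTypeOn, cycleType_viaEmbeddingHom, card_map]

end CycleTypeOn

section ClassesOfPartitions

variable {n : ℕ}

/-- The partition of `n` formed by all cycle lengths of a permutation of `Fin n`. This is
`Equiv.Perm.partition` with `Fintype.card (Fin n)` replaced by `n`. -/
noncomputable def cyclePartition (g : Perm (Fin n)) : n.Partition where
  parts := fullCycleType g
  parts_pos hi := g.partition.parts_pos <| by
    rwa [Perm.parts_partition, ← Perm.sum_cycleType, Fintype.card_fin]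
  parts_sum := by
    rw [fullCycleType_eq_cycleTypeOn_univ, sum_cycleTypeOn (subset_univ _), card_fin]

theorem fullCycleType_eq_iff_cyclePartition_eq {g : Perm (Fin n)} {Δ : n.Partition} :
    fullCycleType g = Δ.parts ↔ cyclePartition g = Δ :=
  (Nat.Partition.ext_iff (x := cyclePartition g)).symm

theorem isConj_of_fullCycleType_eq {g h : Perm (Fin n)} (hgh : fullCycleType g = fullCycleType h) :
    IsConj g h := by
  rw [Perm.partition_eq_of_isConj, Nat.Partition.ext_iff, Perm.parts_partition,
    Perm.parts_partition, ← Perm.sum_cycleType, ← Perm.sum_cycleType, Fintype.card_fin]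
  exact hgh

theorem exists_cyclePartition_eq (Δ : n.Partition) : ∃ g, cyclePartition g = Δ := by
  set long := Δ.parts.filter (2 ≤ ·)
  have parts_eq : Δ.parts = long + Multiset.replicate (Δ.parts.filter (¬ 2 ≤ ·)).card 1 := by
    rw [← Multiset.eq_replicate_card.mpr, Multiset.filter_add_not]
    intro i hi
    have := Δ.parts_pos (Multiset.mem_of_mem_filter hi)
    have := Multiset.of_mem_filter hi
    lia
  have sum_eq : long.sum + (Δ.parts.filter (¬ 2 ≤ ·)).card = n := by
    simpa [← parts_eq] using congrArg Multiset.sum parts_eq.symm |>.trans Δ.parts_sum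
  obtain ⟨g, hg⟩ := (Perm.exists_with_cycleType_iff (Fin n) (m := long)).mpr
    ⟨by rw [Fintype.card_fin]; lia, fun i hi => Multiset.of_mem_filter hi⟩
  refine ⟨g, fullCycleType_eq_iff_cyclePartition_eq.mp ?_⟩
  rw [fullCycleType, hg, parts_eq]
  congr 2
  lia

end ClassesOfPartitions

section CoordinatesOfClassFunctions

variable {n : ℕ}

theorem coeff_embedCenter (x : n.Partition → ℚ) (g : Perm (Fin n)) :
    (embedCenter x).coeff g = x (cyclePartition g) := by
  simp [embedCenter, classSum, MonoidAlgebra.coeff_sum, Finsupp.single_apply,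
    fullCycleType_eq_iff_cyclePartition_eq]

theorem classCoeff_eq_of_forall_coeff_eq {z : MonoidAlgebra ℚ (Perm (Fin n))} {Δ : n.Partition}
    {c : ℚ} (hz : ∀ g, cyclePartition g = Δ → z.coeff g = c) : classCoeff z Δ = c := by
  obtain ⟨g, hg⟩ := exists_cyclePartition_eq Δ
  have card_ne_zero : (#{g : Perm (Fin n) | fullCycleType g = Δ.parts} : ℚ) ≠ 0 :=
    Nat.cast_ne_zero.mpr <| card_ne_zero.mpr
      ⟨g, by simpa [fullCycleType_eq_iff_cyclePartition_eq] using hg⟩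
  rw [classCoeff, div_eq_iff card_ne_zero, sum_congr rfl fun g hg => hz g <|
    fullCycleType_eq_iff_cyclePartition_eq.mp (mem_filter.mp hg).2, sum_const, nsmul_eq_mul,
    mul_comm]

theorem classCoeff_embedCenter (x : n.Partition → ℚ) : classCoeff (embedCenter x) = x :=
  funext fun _ => classCoeff_eq_of_forall_coeff_eq fun g hg => by rw [coeff_embedCenter, hg]

theorem embedCenter_classCoeff {z : MonoidAlgebra ℚ (Perm (Fin n))}
    (hz : ∀ c g, z.coeff (c * g * c⁻¹) = z.coeff g) : embedCenter (classCoeff z) = z := by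
  ext g
  rw [coeff_embedCenter]
  refine classCoeff_eq_of_forall_coeff_eq fun h hh => ?_
  obtain ⟨c, rfl⟩ := isConj_iff.mp <|
    isConj_of_fullCycleType_eq (fullCycleType_eq_iff_cyclePartition_eq.mpr hh.symm)
  exact hz c g

/-- `classCoeff`, the averaging of coefficients over classes, as a linear map. -/
noncomputable def classCoeffLinear (n : ℕ) :
    MonoidAlgebra ℚ (Perm (Fin n)) →ₗ[ℚ] (n.Partition → ℚ) where
  toFun := classCoeff
  map_add' x y := by
    ext Δ
    simp [classCoeff, sum_add_distrib, add_div]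
  map_smul' c x := by
    ext Δ
    simp [classCoeff, ← mul_sum, mul_div_assoc]

end CoordinatesOfClassFunctions

section ClassSumOn

variable {α β : Type*} [Fintype α] [DecidableEq α] [Fintype β] [DecidableEq β] {k : ℕ}

/-- The permutations supported in `D` whose cycle type as permutations of `D` is `Δ`. It is empty
unless `D` has `k` elements. -/
def classOn (D : Finset α) (Δ : k.Partition) : Finset (Perm α) :=
  {g | g.support ⊆ D ∧ cycleTypeOn D g = Δ.parts}

theorem mem_classOn {D : Finset α} {Δ : k.Partition} {g : Perm α} :
    g ∈ classOn D Δ ↔ g.support ⊆ D ∧ cycleTypeOn D g = Δ.parts := by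
  rw [classOn, mem_filter_univ]

theorem card_eq_of_mem_classOn {D : Finset α} {Δ : k.Partition} {g : Perm α}
    (hg : g ∈ classOn D Δ) : #D = k := by
  obtain ⟨supp, type⟩ := mem_classOn.mp hg
  rw [← sum_cycleTypeOn supp, type, Δ.parts_sum]

theorem classOn_map (e : α ↪ β) (D : Finset α) (Δ : k.Partition) :
    classOn (D.map e) Δ =
      (classOn D Δ).map ⟨Perm.viaEmbeddingHom e, Perm.viaEmbeddingHom_injective e⟩ := by
  ext g
  simp only [mem_map, mem_classOn, Function.Embedding.coeFn_mk]
  constructor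
  · rintro ⟨supp, type⟩
    obtain ⟨h, rfl⟩ := exists_viaEmbeddingHom_eq e (supp.trans (map_subset_map.mpr (subset_univ D)))
    rw [support_viaEmbeddingHom, map_subset_map] at supp
    rw [cycleTypeOn_map_viaEmbeddingHom] at type
    exact ⟨h, ⟨supp, type⟩, rfl⟩
  · rintro ⟨h, ⟨supp, type⟩, rfl⟩
    rw [support_viaEmbeddingHom, map_subset_map, cycleTypeOn_map_viaEmbeddingHom]
    exact ⟨supp, type⟩

/-- The element of `ℚ[Perm α]` obtained from an element of `A_k`, given by its class-sum
coordinates, by letting permutations of `k` points act on the subset `D`. It is `0` unless `D` has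
`k` elements. -/
noncomputable def embedOn (D : Finset α) : (k.Partition → ℚ) →ₗ[ℚ] MonoidAlgebra ℚ (Perm α) :=
  Fintype.linearCombination ℚ fun Δ => ∑ g ∈ classOn D Δ, MonoidAlgebra.single g 1

theorem embedOn_eq_zero_of_card_ne {D : Finset α} (hD : #D ≠ k) (x : k.Partition → ℚ) :
    embedOn D x = 0 := by
  have empty (Δ : k.Partition) : classOn D Δ = ∅ :=
    eq_empty_of_forall_notMem fun _ hg => hD (card_eq_of_mem_classOn hg)
  simp [embedOn, Fintype.linearCombination_apply, empty]

theorem coeff_embedOn (D : Finset α) (x : k.Partition → ℚ) (g : Perm α) :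
    (embedOn D x).coeff g = ∑ Δ, if g ∈ classOn D Δ then x Δ else 0 := by
  simp [embedOn, Fintype.linearCombination_apply, MonoidAlgebra.coeff_sum, Finsupp.single_apply]

theorem embedOn_univ {n : ℕ} (x : n.Partition → ℚ) : embedOn univ x = embedCenter x := by
  simp [embedOn, Fintype.linearCombination_apply, embedCenter, classSum, classOn,
    fullCycleType_eq_cycleTypeOn_univ]

theorem transport_embedOn (e : α ↪ β) (D : Finset α) (x : k.Partition → ℚ) :
    transport e (embedOn D x) = embedOn (D.map e) x := by
  simp [embedOn, Fintype.linearCombination_apply, transport, classOn_map]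

end ClassSumOn

section Rho

theorem card_filter_superset_card_eq {α : Type*} [Fintype α] [DecidableEq α] (s : Finset α) {m : ℕ}
    (hm : m ≤ Fintype.card α) :
    #{D : Finset α | s ⊆ D ∧ #D = m} = (Fintype.card α - #s).choose (Fintype.card α - m) := by
  rw [← card_compl, ← card_powersetCard]
  refine card_equiv (compl_involutive.toPerm _) fun D => ?_
  have := card_le_univ D
  simp only [mem_filter_univ, Function.Involutive.coe_toPerm, mem_powersetCard,
    compl_subset_compl, card_compl]
  lia

variable {m n : ℕ}

theorem mem_classOn_iff_fullCycleType_eq {D : Finset (Fin n)} {Δ : m.Partition}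
    {g : Perm (Fin n)} :
    g ∈ classOn D Δ ↔ (g.support ⊆ D ∧ #D = m) ∧
      fullCycleType g = Δ.parts + Multiset.replicate (n - m) 1 := by
  have card_le : #D ≤ #(univ : Finset (Fin n)) := card_le_univ D
  rw [fullCycleType_eq_cycleTypeOn_univ]
  constructor
  · intro hg
    obtain ⟨supp, type⟩ := mem_classOn.mp hg
    have card := card_eq_of_mem_classOn hg
    refine ⟨⟨supp, card⟩, ?_⟩
    rw [cycleTypeOn_eq_add_replicate supp card_le, type, card_fin, card]
  · rintro ⟨⟨supp, rfl⟩, type⟩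
    rw [cycleTypeOn_eq_add_replicate supp card_le, card_fin] at type
    exact mem_classOn.mpr ⟨supp, add_right_cancel type⟩

theorem card_filter_mem_classOn (hmn : m ≤ n) (Δ : m.Partition) (g : Perm (Fin n)) :
    #{D | g ∈ classOn D Δ} =
      if fullCycleType g = Δ.parts + Multiset.replicate (n - m) 1 then
        (Δ.parts.count 1 + (n - m)).choose (Δ.parts.count 1)
      else 0 := by
  simp only [mem_classOn_iff_fullCycleType_eq]
  split_ifs with type
  · have count_one : n - #g.support = Δ.parts.count 1 + (n - m) := by
      simpa [fullCycleType_eq_cycleTypeOn_univ, count_one_cycleTypeOn]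
        using congrArg (Multiset.count 1) type
    simp only [type, and_true]
    rw [card_filter_superset_card_eq _ (by rwa [Fintype.card_fin]), Fintype.card_fin, count_one,
      Nat.choose_symm_add]
  · simp [type]

theorem rhoTo_of_lt (hnm : n < m) (x : m.Partition → ℚ) : rhoTo n x = 0 :=
  funext fun _ => if_neg hnm.not_ge

theorem embedCenter_rhoTo (n : ℕ) (x : m.Partition → ℚ) :
    embedCenter (rhoTo n x) = ∑ D : Finset (Fin n), embedOn D x := by
  rcases lt_or_ge n m with hnm | hmn
  · have card_ne (D : Finset (Fin n)) : #D ≠ m := by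
      have := card_finset_fin_le D
      lia
    simp [rhoTo_of_lt hnm, embedCenter, embedOn_eq_zero_of_card_ne (card_ne _)]
  ext g
  simp only [coeff_embedCenter, rhoTo, if_pos hmn, MonoidAlgebra.coeff_sum, Finsupp.coe_finsetSum,
    Finset.sum_apply, coeff_embedOn]
  rw [sum_comm]
  refine sum_congr rfl fun Δ _ => ?_
  rw [← sum_filter, sum_const, nsmul_eq_mul, card_filter_mem_classOn hmn]
  change (if fullCycleType g = _ then _ else 0) = _
  split_ifs <;> simp [Nat.cast_add_choose]

theorem rhoTo_self (x : n.Partition → ℚ) : rhoTo n x = x := by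
  rw [← classCoeff_embedCenter (rhoTo n x), embedCenter_rhoTo, Fintype.sum_eq_single univ,
    embedOn_univ, classCoeff_embedCenter]
  intro D hD
  refine embedOn_eq_zero_of_card_ne (fun card => hD ?_) x
  rwa [← card_eq_iff_eq_univ, Fintype.card_fin]

/-- The padding map `ρ_{n-m} : A_m → A_n` as a linear map. -/
noncomputable def rhoLinear (m n : ℕ) : (m.Partition → ℚ) →ₗ[ℚ] (n.Partition → ℚ) where
  toFun := rhoTo n
  map_add' x y := by
    ext Λ
    simp only [rhoTo, Pi.add_apply, mul_add]
    split_ifs <;> simp [← sum_add_distrib, ite_add_ite]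
  map_smul' c x := by
    ext Λ
    simp only [rhoTo, Pi.smul_apply, smul_eq_mul, mul_left_comm, RingHom.id_apply]
    split_ifs <;> simp [mul_sum]

theorem rhoTo_zero (m n : ℕ) : rhoTo n (0 : m.Partition → ℚ) = 0 :=
  map_zero (rhoLinear m n)

end Rho

section UnionProduct

variable {α β : Type*} [Fintype α] [DecidableEq α] [Fintype β] [DecidableEq β] {k₁ k₂ : ℕ}

/-- The part of the product of `∑ D, embedOn D x` and `∑ D, embedOn D y` that comes from pairs of
subsets with union `S`. -/
noncomputable def unionProduct (x : k₁.Partition → ℚ) (y : k₂.Partition → ℚ) (S : Finset α) :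
    MonoidAlgebra ℚ (Perm α) :=
  ∑ D : Finset α × Finset α with D.1 ∪ D.2 = S, embedOn D.1 x * embedOn D.2 y

variable (x : k₁.Partition → ℚ) (y : k₂.Partition → ℚ)

theorem sum_unionProduct :
    ∑ S : Finset α, unionProduct x y S = (∑ D, embedOn D x) * ∑ D, embedOn D y := by
  simp only [unionProduct]
  rw [sum_fiberwise, Fintype.sum_prod_type, sum_mul_sum]

theorem transport_unionProduct (e : α ↪ β) (S : Finset α) :
    transport e (unionProduct x y S) = unionProduct x y (S.map e) := by
  simp only [unionProduct, map_sum, map_mul, transport_embedOn]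
  refine sum_bij (fun D _ => (D.1.map e, D.2.map e)) ?_ ?_ ?_ fun _ _ => rfl
  · simp +contextual [← map_union]
  · simp +contextual [Prod.ext_iff]
  · rintro ⟨E₁, E₂⟩ hE
    replace hE : E₁ ∪ E₂ = S.map e := (mem_filter.mp hE).2
    obtain ⟨D₁, -, rfl⟩ := subset_map_iff.mp (hE ▸ subset_union_left)
    obtain ⟨D₂, -, rfl⟩ := subset_map_iff.mp (hE ▸ subset_union_right)
    rw [← map_union, map_inj] at hE
    exact ⟨(D₁, D₂), by simpa using hE, rfl⟩

theorem unionProduct_eq_zero {S : Finset α} (hS : k₁ + k₂ < #S) : unionProduct x y S = 0 := by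
  refine sum_eq_zero fun D hD => ?_
  have card_le : #S ≤ #D.1 + #D.2 := (mem_filter.mp hD).2 ▸ card_union_le D.1 D.2
  by_cases hD₁ : #D.1 = k₁
  · rw [embedOn_eq_zero_of_card_ne (D := D.2) (by lia), mul_zero]
  · rw [embedOn_eq_zero_of_card_ne hD₁, zero_mul]

theorem coeff_unionProduct_univ_conj (c g : Perm α) :
    (unionProduct x y univ).coeff (c * g * c⁻¹) = (unionProduct x y univ).coeff g := by
  simpa only [transport_unionProduct, map_univ_equiv, viaEmbeddingHom_toEmbedding]
    using coeff_transport_viaEmbeddingHom c.toEmbedding (unionProduct x y univ) g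

/-- The class-sum coordinates of the part of `unionProduct` that uses all of the `k` points: a
closed form of `{Δ₁Δ₂}_k`, bilinearly extended, which makes sense for every `k`. -/
noncomputable def unionBracket (k : ℕ) : k.Partition → ℚ :=
  classCoeff (unionProduct x y (univ : Finset (Fin k)))

theorem unionBracket_eq_zero {k : ℕ} (hk : k₁ + k₂ < k) : unionBracket x y k = 0 := by
  rw [unionBracket, unionProduct_eq_zero x y (by rwa [card_fin])]
  exact map_zero (classCoeffLinear k)

theorem embedOn_unionBracket {n : ℕ} (S : Finset (Fin n)) :
    embedOn S (unionBracket x y #S) = unionProduct x y S := by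
  have map_univ : univ.map (S.orderEmbOfFin rfl).toEmbedding = S := by simp
  have embed_univ :
      embedOn (univ : Finset (Fin #S)) (unionBracket x y #S) = unionProduct x y univ := by
    rw [embedOn_univ, unionBracket, embedCenter_classCoeff (coeff_unionProduct_univ_conj x y)]
  simpa only [transport_embedOn, transport_unionProduct, map_univ]
    using congrArg (transport (S.orderEmbOfFin rfl).toEmbedding) embed_univ

theorem circ_rhoTo_rhoTo (n : ℕ) :
    circ (rhoTo n x) (rhoTo n y) =
      ∑ k ∈ range (k₁ + k₂ + 1), rhoTo n (unionBracket x y k) := by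
  have sum_embedOn (S : Finset (Fin n)) :
      ∑ k ∈ range (k₁ + k₂ + 1), embedOn S (unionBracket x y k) = unionProduct x y S := by
    rw [← embedOn_unionBracket]
    refine sum_eq_single _ (fun k _ hk => embedOn_eq_zero_of_card_ne hk.symm _) fun hS => ?_
    rw [unionBracket_eq_zero x y (by simpa using hS), map_zero]
  have embed_mul_embed : embedCenter (rhoTo n x) * embedCenter (rhoTo n y) =
      ∑ k ∈ range (k₁ + k₂ + 1), embedCenter (rhoTo n (unionBracket x y k)) := by
    simp only [embedCenter_rhoTo]
    rw [← sum_unionProduct, sum_comm]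
    exact sum_congr rfl fun S _ => (sum_embedOn S).symm
  calc circ (rhoTo n x) (rhoTo n y)
      = classCoeffLinear n (embedCenter (rhoTo n x) * embedCenter (rhoTo n y)) := rfl
    _ = ∑ k ∈ range (k₁ + k₂ + 1), classCoeff (embedCenter (rhoTo n (unionBracket x y k))) := by
      rw [embed_mul_embed, map_sum]; rfl
    _ = ∑ k ∈ range (k₁ + k₂ + 1), rhoTo n (unionBracket x y k) := by
      simp only [classCoeff_embedCenter]

end UnionProduct

section Projection

/-- The product `∘` of `A_n`, in class-sum coordinates, as a bilinear map. -/
noncomputable def circBilin (n : ℕ) :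
    (n.Partition → ℚ) →ₗ[ℚ] (n.Partition → ℚ) →ₗ[ℚ] (n.Partition → ℚ) :=
  ((LinearMap.mul ℚ (MonoidAlgebra ℚ (Perm (Fin n)))).compl₁₂ (embedOn univ) (embedOn univ)).compr₂
    (classCoeffLinear n)

theorem circBilin_apply {n : ℕ} (x y : n.Partition → ℚ) : circBilin n x y = circ x y := by
  simp only [circBilin, LinearMap.compr₂_apply, LinearMap.compl₁₂_apply, LinearMap.mul_apply',
    embedOn_univ]
  rfl

theorem circ_zero_left {n : ℕ} (y : n.Partition → ℚ) : circ 0 y = 0 := by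
  rw [← circBilin_apply, map_zero, LinearMap.zero_apply]

theorem circ_zero_right {n : ℕ} (x : n.Partition → ℚ) : circ x 0 = 0 := by
  rw [← circBilin_apply, map_zero]

/-- The projection `A_∞° → A_n` that is `ρ_{n-k}` on `A_k` for `k ≤ n` and `0` on `A_k` for
`k > n`. -/
noncomputable def toCenter (n : ℕ) : Ainf →ₗ[ℚ] (n.Partition → ℚ) :=
  DFinsupp.lsum ℕ fun k => rhoLinear k n

theorem toCenter_single (n : ℕ) {k : ℕ} (x : k.Partition → ℚ) :
    toCenter n (DFinsupp.single k x) = rhoTo n x :=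
  DFinsupp.lsum_single ..

theorem toCenter_eq_sum_support (n : ℕ) (x : Ainf) :
    toCenter n x = ∑ k ∈ x.support, rhoTo n (x k) :=
  DFinsupp.sumAddHom_apply ..

theorem toCenter_eq_sum_range_add (n : ℕ) (x : Ainf) :
    toCenter n x = ∑ k ∈ range n, rhoTo n (x k) + x n := by
  conv_rhs => rw [← rhoTo_self (x n), ← sum_range_succ (fun k => rhoTo n (x k))]
  rw [toCenter_eq_sum_support]
  refine sum_congr_of_eq_on_inter (fun k _ hk => ?_) (fun k _ hk => ?_) fun _ _ _ => rfl
  · exact rhoTo_of_lt (by simpa [Nat.lt_succ_iff] using hk) _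
  · rw [DFinsupp.notMem_support_iff.mp hk]
    exact rhoTo_zero k n

theorem rhoTo_eq_sum_smul_diagC (n : ℕ) {k : ℕ} (x : k.Partition → ℚ) :
    rhoTo n x = ∑ Δ, x Δ • rhoTo n (diagC Δ) := by
  have expand : x = ∑ Δ, x Δ • diagC Δ := by
    ext Λ
    simp [diagC]
  change rhoLinear k n x = ∑ Δ, x Δ • rhoLinear k n (diagC Δ)
  conv_lhs => rw [expand, map_sum]
  simp only [map_smul]

end Projection

section Recursion

theorem sum_single_apply_eq_self {ι : Type*} {M : ι → Type*} [DecidableEq ι]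
    [∀ i, AddCommMonoid (M i)] {u : Π₀ i, M i} {s : Finset ι} (hu : ∀ i ∉ s, u i = 0) :
    ∑ i ∈ s, DFinsupp.single i (u i) = u := by
  conv_rhs => rw [← DFinsupp.sum_single (f := u)]
  refine (sum_subset (fun i hi => ?_) fun i _ hi => ?_).symm
  · exact by_contra fun his => DFinsupp.mem_support_iff.mp hi (hu i his)
  · rw [DFinsupp.notMem_support_iff.mp hi, DFinsupp.single_zero]

variable {lo hi : ℕ} {F B : (n : ℕ) → n.Partition → ℚ} {u : Ainf}

theorem apply_eq_zero_of_toCenter_eq_zero (hu : ∀ n < lo, toCenter n u = 0) :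
    ∀ n < lo, u n = 0 := by
  intro n
  induction n using Nat.strong_induction_on with
  | _ n ih =>
    intro hn
    have := hu n hn
    rwa [toCenter_eq_sum_range_add, sum_eq_zero, zero_add] at this
    intro k hk
    have hk := mem_range.mp hk
    rw [ih k hk (hk.trans hn)]
    exact rhoTo_zero k n

theorem apply_eq_sub_sum_Ico (hu : ∀ n < lo, u n = 0) (n : ℕ) :
    u n = toCenter n u - ∑ k ∈ Ico lo n, rhoTo n (u k) := by
  rw [toCenter_eq_sum_range_add, eq_sub_iff_add_eq', add_left_inj]
  refine sum_subset (fun k hk => mem_range.mpr (mem_Ico.mp hk).2) fun k hk hk' => ?_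
  rw [hu k (by simp_all)]
  exact rhoTo_zero k n

theorem sum_single_eq_of_forall_toCenter_eq
    (hB : ∀ n, B n = if lo ≤ n ∧ n ≤ hi then F n - ∑ k ∈ Ico lo n, rhoTo n (B k) else 0)
    (hF : ∀ n < lo, F n = 0) (hu : ∀ n, toCenter n u = F n) (hu_hi : ∀ n, hi < n → u n = 0) :
    ∑ n ∈ Icc lo hi, DFinsupp.single n (B n) = u := by
  have hu_lo := apply_eq_zero_of_toCenter_eq_zero fun n hn => (hu n).trans (hF n hn)
  have B_eq (n : ℕ) : B n = u n := by
    induction n using Nat.strong_induction_on with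
    | _ n ih =>
      rw [hB]
      split_ifs with hn
      · rw [apply_eq_sub_sum_Ico hu_lo n, hu n,
          sum_congr rfl fun k hk => by rw [ih k (mem_Ico.mp hk).2]]
      · rcases not_and_or.mp hn with hn | hn
        · exact (hu_lo n (not_le.mp hn)).symm
        · exact (hu_hi n (not_le.mp hn)).symm
  simp only [B_eq]
  refine sum_single_apply_eq_self fun n hn => ?_
  rcases not_and_or.mp (mt mem_Icc.mpr hn) with hn | hn
  · exact hu_lo n (not_le.mp hn)
  · exact hu_hi n (not_le.mp hn)

end Recursion

section Product

variable {n₁ n₂ n₃ : ℕ} (Δ₁ : n₁.Partition) (Δ₂ : n₂.Partition) (Δ₃ : n₃.Partition)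

theorem bracket_eq_ite (n : ℕ) :
    bracket Δ₁ Δ₂ n = if max n₁ n₂ ≤ n ∧ n ≤ n₁ + n₂ then
      circ (rhoTo n (diagC Δ₁)) (rhoTo n (diagC Δ₂)) -
        ∑ k ∈ Ico (max n₁ n₂) n, rhoTo n (bracket Δ₁ Δ₂ k) else 0 := by
  rw [bracket, sum_attach _ fun k => rhoTo n (bracket Δ₁ Δ₂ k)]

theorem bracket3_eq_ite (n : ℕ) :
    bracket3 Δ₁ Δ₂ Δ₃ n = if max (max n₁ n₂) n₃ ≤ n ∧ n ≤ n₁ + n₂ + n₃ then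
      circ (circ (rhoTo n (diagC Δ₁)) (rhoTo n (diagC Δ₂))) (rhoTo n (diagC Δ₃)) -
        ∑ k ∈ Ico (max (max n₁ n₂) n₃) n, rhoTo n (bracket3 Δ₁ Δ₂ Δ₃ k) else 0 := by
  rw [bracket3, sum_attach _ fun k => rhoTo n (bracket3 Δ₁ Δ₂ Δ₃ k)]

theorem circ_rhoTo_diagC_eq_zero {n : ℕ} (hn : n < max n₁ n₂) :
    circ (rhoTo n (diagC Δ₁)) (rhoTo n (diagC Δ₂)) = 0 := by
  rcases lt_max_iff.mp hn with h | h
  · rw [rhoTo_of_lt h, circ_zero_left]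
  · rw [rhoTo_of_lt h, circ_zero_right]

theorem circ_circ_rhoTo_diagC_eq_zero {n : ℕ} (hn : n < max (max n₁ n₂) n₃) :
    circ (circ (rhoTo n (diagC Δ₁)) (rhoTo n (diagC Δ₂))) (rhoTo n (diagC Δ₃)) = 0 := by
  rcases lt_max_iff.mp hn with h | h
  · rw [circ_rhoTo_diagC_eq_zero Δ₁ Δ₂ h, circ_zero_left]
  · rw [rhoTo_of_lt h, circ_zero_right]

theorem diagMul_eq_sum_unionBracket :
    diagMul Δ₁ Δ₂ = ∑ k ∈ range (n₁ + n₂ + 1),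
      DFinsupp.single k (unionBracket (diagC Δ₁) (diagC Δ₂) k) := by
  refine sum_single_eq_of_forall_toCenter_eq (bracket_eq_ite Δ₁ Δ₂)
    (fun n => circ_rhoTo_diagC_eq_zero Δ₁ Δ₂) (fun n => ?_) fun n hn => ?_
  · simp only [map_sum, toCenter_single, circ_rhoTo_rhoTo]
  · rw [DFinsupp.finsetSum_apply]
    refine sum_eq_zero fun k hk => DFinsupp.single_eq_of_ne ?_
    have := mem_range.mp hk
    lia

theorem toCenter_diagMul (n : ℕ) :
    toCenter n (diagMul Δ₁ Δ₂) = circ (rhoTo n (diagC Δ₁)) (rhoTo n (diagC Δ₂)) := by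
  simp only [diagMul_eq_sum_unionBracket, map_sum, toCenter_single, circ_rhoTo_rhoTo]

theorem diagMul_apply_eq_zero {n : ℕ} (hn : n₁ + n₂ < n) : diagMul Δ₁ Δ₂ n = 0 := by
  rw [diagMul, DFinsupp.finsetSum_apply]
  refine sum_eq_zero fun k hk => DFinsupp.single_eq_of_ne ?_
  have := (mem_Icc.mp hk).2
  lia

theorem toCenter_mulAinf (n : ℕ) (x y : Ainf) :
    toCenter n (mulAinf x y) = circ (toCenter n x) (toCenter n y) := by
  have expand (z : Ainf) :
      toCenter n z = ∑ k ∈ z.support, ∑ Δ, z k Δ • rhoTo n (diagC Δ) := by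
    simp only [toCenter_eq_sum_support, ← rhoTo_eq_sum_smul_diagC]
  rw [← circBilin_apply, expand x]
  simp only [mulAinf, map_sum, map_smul, LinearMap.sum_apply, LinearMap.smul_apply]
  simp only [expand y, map_sum, map_smul, toCenter_diagMul, circBilin_apply, smul_sum, smul_smul]
  exact sum_congr rfl fun k₁ _ => sum_comm

theorem mulAinf_apply_eq_zero {x y : Ainf} {d₁ d₂ : ℕ} (hx : ∀ k, d₁ < k → x k = 0)
    (hy : ∀ k, d₂ < k → y k = 0) {n : ℕ} (hn : d₁ + d₂ < n) : mulAinf x y n = 0 := by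
  simp only [mulAinf, DFinsupp.finsetSum_apply, DFinsupp.smul_apply]
  refine sum_eq_zero fun k₁ hk₁ => sum_eq_zero fun k₂ hk₂ => sum_eq_zero fun Γ₁ _ =>
    sum_eq_zero fun Γ₂ _ => ?_
  have le₁ : k₁ ≤ d₁ := le_of_not_gt fun h => DFinsupp.mem_support_iff.mp hk₁ (hx k₁ h)
  have le₂ : k₂ ≤ d₂ := le_of_not_gt fun h => DFinsupp.mem_support_iff.mp hk₂ (hy k₂ h)
  rw [diagMul_apply_eq_zero Γ₁ Γ₂ (by lia), smul_zero]

theorem toCenter_ofDiag (n : ℕ) : toCenter n (ofDiag Δ₁) = rhoTo n (diagC Δ₁) :=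
  toCenter_single n (diagC Δ₁)

theorem ofDiag_apply_eq_zero {n : ℕ} (hn : n₁ < n) : ofDiag Δ₁ n = 0 :=
  DFinsupp.single_eq_of_ne hn.ne'

end Product

theorem triple_product_in_A_infinity
    {n₁ n₂ n₃ : ℕ} (Δ₁ : Nat.Partition n₁) (Δ₂ : Nat.Partition n₂) (Δ₃ : Nat.Partition n₃) :
    mulAinf (mulAinf (ofDiag Δ₁) (ofDiag Δ₂)) (ofDiag Δ₃) =
      ∑ n ∈ Finset.Icc (max (max n₁ n₂) n₃) (n₁ + n₂ + n₃),
        DFinsupp.single n (bracket3 Δ₁ Δ₂ Δ₃ n) := by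
  symm
  refine sum_single_eq_of_forall_toCenter_eq (bracket3_eq_ite Δ₁ Δ₂ Δ₃)
    (fun n => circ_circ_rhoTo_diagC_eq_zero Δ₁ Δ₂ Δ₃) (fun n => ?_) fun n hn => ?_
  · simp only [toCenter_mulAinf, toCenter_ofDiag]
  · have degree_le_two (k : ℕ) (hk : n₁ + n₂ < k) : mulAinf (ofDiag Δ₁) (ofDiag Δ₂) k = 0 :=
      mulAinf_apply_eq_zero (fun _ => ofDiag_apply_eq_zero Δ₁) (fun _ => ofDiag_apply_eq_zero Δ₂) hk
    exact mulAinf_apply_eq_zero degree_le_two (fun _ => ofDiag_apply_eq_zero Δ₃) hn
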